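/- arXiv:2501.17249 — 2 statements merged into one kernel-verified Lean document; each statement's English description precedes it below -/
import Mathlib

section
/- Let S be a full-dimensional alcoved simplex in H_n, i.e., a simplex of dimension n−1 all of whose facet outer normals are parallel to roots e_i - e_j. Then there exists a cyclic order (i.e., a nondegenerate ordered set partition) S' = (i_1, i_2, ..., i_n) of [n] such that the normal fan of S equals the normal fan of the alcoved simplex Δ_{S'}. -/
/-- The face of `P` in direction `w`: the set of points of `P` maximizing `⟨w, ·⟩`. -/
def faceOf {n : ℕ} (P : Set (Fin n → ℝ)) (w : Fin n → ℝ) : Set (Fin n → ℝ) :=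
  {x ∈ P | ∀ y ∈ P, (∑ i, w i * y i) ≤ ∑ i, w i * x i}

open Finset in
theorem exists_facet {n : ℕ} (hn : 2 ≤ n) (S : Set (Fin n → ℝ))
    (a : Fin n → Fin n → ℝ)
    (halc : S = {x : Fin n → ℝ | (∑ i, x i) = 0 ∧ ∀ i j, x i - x j ≤ a i j})
    (V : Fin n → (Fin n → ℝ)) (hV : AffineIndependent ℝ V)
    (hSV : S = convexHull ℝ (Set.range V)) (hVS : ∀ l, V l ∈ S) (k : Fin n) :
    ∃ i j, (∀ l, l ≠ k → V l i - V l j = a i j) ∧ V k i - V k j < a i j := by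
  by_contra hcon
  push Not at hcon
  rw [halc] at hVS
  have hVs : ∀ l i j, 0 ≤ a i j - (V l i - V l j) := fun l i j => by
    have := (hVS l).2 i j
    linarith
  have hcard : (0 : ℝ) < (n : ℝ) - 1 := by
    have : (2 : ℝ) ≤ n := by exact_mod_cast hn
    linarith
  -- total slack away from `k`
  let p : Fin n → Fin n → ℝ := fun i j => ∑ l ∈ univ.erase k, (a i j - (V l i - V l j))
  have hp0 : ∀ i j, 0 ≤ p i j := fun i j => sum_nonneg fun l _ => hVs l i j
  have hev : ∀ᶠ e : ℝ in nhdsWithin 0 (Set.Ioi 0), ∀ i j,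
      0 ≤ (1 + e) * (p i j / (n - 1)) - e * (a i j - (V k i - V k j)) := by
    rw [Filter.eventually_all]
    intro i
    rw [Filter.eventually_all]
    intro j
    rcases (hp0 i j).eq_or_lt with h | h
    · have h1 : ∀ l, l ≠ k → V l i - V l j = a i j := by
        intro l hl
        have := (sum_eq_zero_iff_of_nonneg (fun l _ => hVs l i j)).1 h.symm l (by simp [hl])
        linarith
      have h2 := hcon i j h1
      have h3 := hVs k i j
      have h4 : a i j - (V k i - V k j) = 0 := by linarith
      filter_upwards with e
      rw [← h, h4]; simp
    · have hc : Filter.Tendsto (fun e : ℝ => (1 + e) * (p i j / (n - 1)) - e * (a i j - (V k i - V k j)))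
          (nhdsWithin 0 (Set.Ioi 0)) (nhds ((1 + 0) * (p i j / (n - 1)) - 0 * (a i j - (V k i - V k j)))) := by
        apply Filter.Tendsto.mono_left _ nhdsWithin_le_nhds
        apply Continuous.tendsto (by fun_prop) (0 : ℝ)
      have hpos : 0 < ((1 + 0) * (p i j / ((n : ℝ) - 1)) - 0 * (a i j - (V k i - V k j))) := by
        have := div_pos h hcard
        linarith
      filter_upwards [hc.eventually (lt_mem_nhds hpos)] with e he using he.le
  obtain ⟨e, he, hepos⟩ := (hev.and self_mem_nhdsWithin).exists
  have hepos : 0 < e := hepos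
  let μ : Fin n → ℝ := fun l => if l = k then -e else (1 + e) / (n - 1)
  have hμs : ∀ f : Fin n → ℝ, ∑ l, μ l * f l = (1 + e) * ((∑ l ∈ univ.erase k, f l) / (n - 1)) - e * f k := by
    intro f
    rw [← add_sum_erase univ _ (mem_univ k)]
    have : ∑ l ∈ univ.erase k, μ l * f l = ∑ l ∈ univ.erase k, (1 + e) / (n - 1) * f l := by
      apply sum_congr rfl
      intro l hl
      simp [μ, (mem_erase.1 hl).1]
    rw [this, ← mul_sum]
    simp only [μ, if_true]
    ring
  have hμ1 : ∑ l, μ l = 1 := by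
    have := hμs (fun _ => 1)
    simp only [mul_one, sum_const, card_erase_of_mem (mem_univ k), card_univ, Fintype.card_fin, nsmul_eq_mul] at this
    rw [this, Nat.cast_sub (by omega), Nat.cast_one, div_self hcard.ne']
    ring
  have hx : (∑ l, μ l • V l) ∈ S := by
    rw [halc]
    refine ⟨?_, fun i j => ?_⟩
    · simp only [Finset.sum_apply, Pi.smul_apply, smul_eq_mul]
      rw [sum_comm]
      simp only [← mul_sum]
      apply sum_eq_zero
      intro l _
      rw [(hVS l).1, mul_zero]
    · have h1 := he i j
      rw [← hμs (fun l => a i j - (V l i - V l j))] at h1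
      simp only [mul_sub, sum_sub_distrib, ← sum_mul, hμ1] at h1
      simp only [Finset.sum_apply, Pi.smul_apply, smul_eq_mul]
      linarith
  rw [hSV, convexHull_range_eq_exists_affineCombination] at hx
  obtain ⟨s, ν, hν0, hν1, hν⟩ := hx
  rw [affineCombination_eq_linear_combination _ _ _ hν1] at hν
  let ν' : Fin n → ℝ := fun l => if l ∈ s then ν l else 0
  have key := (affineIndependent_iff.1 hV) univ (fun l => ν' l - μ l)
    (by simp [ν', sum_sub_distrib, hμ1, hν1])
    (by simp [ν', sub_smul, sum_sub_distrib, ← hν, ite_smul]) k (mem_univ k)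
  have h0 : 0 ≤ ν' k := by
    simp only [ν']
    split_ifs with h
    · exact hν0 k h
    · exact le_rfl
  simp only [μ, if_true] at key
  linarith

open Finset in
theorem exists_bary {n : ℕ} (hn : 0 < n)
    (V : Fin n → (Fin n → ℝ)) (hV : AffineIndependent ℝ V)
    (hV0 : ∀ l, ∑ i, V l i = 0) (x : Fin n → ℝ) (hx : ∑ i, x i = 0) :
    ∃ lam : Fin n → ℝ, ∑ l, lam l = 1 ∧ ∑ l, lam l • V l = x := by
  have hn' : (n : ℝ) ≠ 0 := by exact_mod_cast hn.ne'
  let L : (Fin n → ℝ) →ₗ[ℝ] (Fin n → ℝ) :=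
    { toFun := fun lam => ∑ l, lam l • V l + fun _ => ∑ l, lam l
      map_add' := by
        intro u v
        ext t
        simp [add_smul, sum_add_distrib]
        ring
      map_smul' := by
        intro r u
        ext t
        simp [mul_sum, mul_add, mul_assoc] }
  have hL : ∀ lam, L lam = ∑ l, lam l • V l + fun _ => ∑ l, lam l := fun _ => rfl
  have hsum : ∀ lam, ∑ t, L lam t = n * ∑ l, lam l := by
    intro lam
    simp only [hL, Pi.add_apply, Finset.sum_apply, Pi.smul_apply, smul_eq_mul, sum_add_distrib]
    rw [sum_comm]
    simp [← mul_sum, hV0]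
  have hinj : Function.Injective L := by
    rw [injective_iff_map_eq_zero]
    intro lam h
    have h1 : ∑ l, lam l = 0 := by
      have := hsum lam
      rw [h] at this
      simpa [hn'] using this.symm
    have h2 : ∑ l, lam l • V l = 0 := by
      have := hL lam
      rw [h, h1] at this
      ext t
      simpa using (congrFun this t).symm
    ext l
    exact (affineIndependent_iff.1 hV) univ lam h1 h2 l (mem_univ l)
  obtain ⟨lam, hlam⟩ := LinearMap.injective_iff_surjective.1 hinj (x + fun _ => 1)
  have h1 : ∑ l, lam l = 1 := by
    have := hsum lam
    rw [hlam] at this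
    simp [sum_add_distrib, hx] at this
    have h2 : (n : ℝ) * (∑ l, lam l) = n * 1 := by linarith
    exact mul_left_cancel₀ hn' h2
  refine ⟨lam, h1, ?_⟩
  have := hL lam
  rw [hlam, h1] at this
  exact (add_right_cancel this).symm

open Finset in
/-- Combinatorial structure: the simplex is cut out by a cyclic system of inequalities. -/
theorem exists_cycle {n : ℕ} (hn : 2 ≤ n) (S : Set (Fin n → ℝ))
    (a : Fin n → Fin n → ℝ)
    (halc : S = {x : Fin n → ℝ | (∑ i, x i) = 0 ∧ ∀ i j, x i - x j ≤ a i j})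
    (V : Fin n → (Fin n → ℝ)) (hV : AffineIndependent ℝ V)
    (hSV : S = convexHull ℝ (Set.range V)) (v0 : Fin n) :
    ∃ (π : Equiv.Perm (Fin n)) (z : Fin n → ℝ) (c : ℝ), 0 < c ∧ ∑ i, z i = 0 ∧
      (∀ x, x ∈ S ↔ ∑ i, x i = 0 ∧
        ∀ v, x v - x (π v) ≤ z v - z (π v) + c * (if v = v0 then 1 else 0)) ∧
      ∀ u v, π.SameCycle u v := by
  have hVS : ∀ l, V l ∈ S := fun l => by
    rw [hSV]; exact subset_convexHull _ _ ⟨l, rfl⟩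
  choose I J hIJ hIJk using exists_facet hn S a halc V hV hSV hVS
  have hV0 : ∀ l, ∑ i, V l i = 0 := fun l => by
    have := hVS l
    rw [halc] at this
    exact this.1
  have hn0 : (n : ℝ) ≠ 0 := by
    have : n ≠ 0 := by omega
    exact_mod_cast this
  let c : Fin n → ℝ := fun k => a (I k) (J k) - (V k (I k) - V k (J k))
  have hc : ∀ k, 0 < c k := fun k => by have := hIJk k; simp only [c]; linarith
  have hslack : ∀ lam : Fin n → ℝ, ∑ l, lam l = 1 → ∀ k,
      a (I k) (J k) - ((∑ l, lam l • V l) (I k) - (∑ l, lam l • V l) (J k)) = c k * lam k := by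
    intro lam h k
    have h1 : ∑ l, lam l * (a (I k) (J k) - (V l (I k) - V l (J k))) = lam k * c k := by
      rw [sum_eq_single k]
      · intro l _ hl
        rw [hIJ k l hl]; ring
      · simp
    simp only [mul_sub, sum_sub_distrib, ← sum_mul, h] at h1
    simp only [Finset.sum_apply, Pi.smul_apply, smul_eq_mul]
    simp only [c] at h1 ⊢
    linarith
  have hbary := exists_bary (by omega) V hV hV0
  -- Fact A
  have factA : ∀ x y : Fin n → ℝ, ∑ i, x i = 0 → ∑ i, y i = 0 →
      (∀ k, x (I k) - x (J k) = y (I k) - y (J k)) → x = y := by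
    intro x y hx hy h
    obtain ⟨l1, h1, rfl⟩ := hbary x hx
    obtain ⟨l2, h2, rfl⟩ := hbary y hy
    have : l1 = l2 := by
      ext k
      have e1 := hslack l1 h1 k
      have e2 := hslack l2 h2 k
      rw [h k, e2] at e1
      exact (mul_left_cancel₀ (hc k).ne' e1).symm
    rw [this]
  have hmean : ∀ d : Fin n → ℝ, ∑ i, (d i - (∑ t, d t) / n) = 0 := by
    intro d
    simp [sum_sub_distrib]
    field_simp
    ring
  have factA' : ∀ d : Fin n → ℝ, (∀ k, d (I k) = d (J k)) → ∀ u v, d u = d v := by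
    intro d hd u v
    have := factA (fun i => d i - (∑ t, d t) / n) 0 (hmean d) (by simp) (by intro k; simp [hd k])
    have h1 := congrFun this u
    have h2 := congrFun this v
    simp at h1 h2
    linarith
  have factB : ∀ x : Fin n → ℝ, ∑ i, x i = 0 →
      ∑ k, (a (I k) (J k) - (x (I k) - x (J k))) / c k = 1 := by
    intro x hx
    obtain ⟨l1, h1, rfl⟩ := hbary x hx
    rw [← h1]
    apply sum_congr rfl
    intro k _
    rw [hslack l1 h1 k]
    field_simp [(hc k).ne']
  have factB' : ∀ d : Fin n → ℝ, ∑ k, d (I k) / c k = ∑ k, d (J k) / c k := by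
    intro d
    have e1 := factB _ (hmean d)
    have e2 := factB 0 (by simp)
    simp only [sub_sub_sub_cancel_right, sub_div, sum_sub_distrib, Pi.zero_apply] at e1 e2
    simp at e2
    linarith
  have factC : ∀ x : Fin n → ℝ, ∑ i, x i = 0 →
      (∀ k, x (I k) - x (J k) ≤ a (I k) (J k)) → x ∈ S := by
    intro x hx h
    obtain ⟨l1, h1, rfl⟩ := hbary x hx
    have hl : ∀ k, 0 ≤ l1 k := by
      intro k
      have e1 := hslack l1 h1 k
      have e2 := h k
      by_contra hneg
      push Not at hneg
      have := mul_neg_of_pos_of_neg (hc k) hneg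
      linarith
    rw [hSV]
    exact (convex_convexHull ℝ _).sum_mem (fun k _ => hl k) h1
      (fun k _ => subset_convexHull _ _ ⟨k, rfl⟩)
  have hsurj : ∀ v, (∃ k, I k = v) ∧ (∃ k, J k = v) := by
    intro v
    have hB := factB' (Pi.single v 1)
    have hnn : ∀ F : Fin n → Fin n, ∀ k, 0 ≤ (Pi.single v 1 : Fin n → ℝ) (F k) / c k := by
      intro F k
      apply div_nonneg _ (hc k).le
      by_cases h : F k = v
      · rw [h]; simp
      · simp [Pi.single_eq_of_ne h]
    have hz : ∀ F : Fin n → Fin n, ∑ k, (Pi.single v 1 : Fin n → ℝ) (F k) / c k = 0 ↔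
        ∀ k, F k ≠ v := by
      intro F
      rw [sum_eq_zero_iff_of_nonneg (fun k _ => hnn F k)]
      constructor
      · intro h k hk
        have := h k (mem_univ k)
        rw [hk] at this
        simp [(hc k).ne'] at this
      · intro h k _
        simp [Pi.single_eq_of_ne (h k)]
    have hnot : ¬ ((∀ k, I k ≠ v) ∧ (∀ k, J k ≠ v)) := by
      rintro ⟨h1, h2⟩
      have hconst := factA' (Pi.single v 1)
        (fun k => by simp [Pi.single_eq_of_ne (h1 k), Pi.single_eq_of_ne (h2 k)])
      have : Nontrivial (Fin n) := Fin.nontrivial_iff_two_le.2 hn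
      obtain ⟨u, hu⟩ := exists_ne v
      have := hconst v u
      simp [Pi.single_eq_of_ne hu] at this
    constructor
    · by_contra h
      push Not at h
      have h' := (hz I).2 h
      rw [hB] at h'
      exact hnot ⟨h, (hz J).1 h'⟩
    · by_contra h
      push Not at h
      have h' := (hz J).2 h
      rw [← hB] at h'
      exact hnot ⟨(hz I).1 h', h⟩
  have hIb : Function.Bijective I := Finite.surjective_iff_bijective.1 fun v => (hsurj v).1
  have hJb : Function.Bijective J := Finite.surjective_iff_bijective.1 fun v => (hsurj v).2
  let eI := Equiv.ofBijective I hIb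
  let eJ := Equiv.ofBijective J hJb
  have heI : ∀ k, eI k = I k := fun _ => rfl
  have heJ : ∀ k, eJ k = J k := fun _ => rfl
  let π : Equiv.Perm (Fin n) := eI.symm.trans eJ
  have hπ : ∀ k, π (I k) = J k := by
    intro k
    simp only [π, Equiv.trans_apply, ← heI, ← heJ, Equiv.symm_apply_apply]
  obtain ⟨k0, hk0⟩ := hIb.2 v0
  have hz : ∀ k, V k0 (I k) - V k0 (J k) + c k0 * (if I k = v0 then 1 else 0) = a (I k) (J k) := by
    intro k
    by_cases h : k = k0
    · subst h
      simp only [hk0, if_true, c]; ring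
    · have : I k ≠ v0 := fun h' => h (hIb.1 (h'.trans hk0.symm))
      rw [if_neg this, hIJ k k0 (Ne.symm h)]; ring
  refine ⟨π, V k0, c k0, hc k0, hV0 k0, fun x => ⟨fun hx => ?_, fun hx => ?_⟩, ?_⟩
  · rw [halc] at hx
    refine ⟨hx.1, fun v => ?_⟩
    obtain ⟨k, rfl⟩ := hIb.2 v
    rw [hπ, hz]
    exact hx.2 _ _
  · refine factC x hx.1 fun k => ?_
    have := hx.2 (I k)
    rwa [hπ, hz] at this
  · classical
    intro u v
    have := factA' (fun t => if π.SameCycle u t then 1 else 0) (fun k => by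
      simp only [← hπ, Equiv.Perm.sameCycle_apply_right]) u v
    by_contra h
    simp [h] at this
    exact this (Equiv.Perm.SameCycle.refl π u)

theorem mem_face_iff {n : ℕ} (S D : Set (Fin n → ℝ)) (z : Fin n → ℝ) (c : ℝ) (hc : 0 < c)
    (h : ∀ y, z + c • y ∈ S ↔ y ∈ D) (w y : Fin n → ℝ) :
    z + c • y ∈ faceOf S w ↔ y ∈ faceOf D w := by
  have hexp : ∀ y : Fin n → ℝ, ∑ i, w i * (z + c • y) i = ∑ i, w i * z i + c * ∑ i, w i * y i := by
    intro y
    rw [Finset.mul_sum, ← Finset.sum_add_distrib]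
    apply Finset.sum_congr rfl
    intro i _
    simp only [Pi.add_apply, Pi.smul_apply, smul_eq_mul]; ring
  have hsurj : ∀ x : Fin n → ℝ, ∃ y, x = z + c • y := fun x =>
    ⟨c⁻¹ • (x - z), by rw [smul_inv_smul₀ hc.ne']; simp⟩
  simp only [faceOf, Set.mem_ofPred_eq, h]
  refine and_congr_right fun _ => ⟨fun hh y' hy' => ?_, fun hh x hx => ?_⟩
  · have := hh _ ((h y').2 hy')
    rw [hexp, hexp] at this
    exact le_of_mul_le_mul_left (by linarith) hc
  · obtain ⟨y', rfl⟩ := hsurj x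
    have := mul_le_mul_of_nonneg_left (hh y' ((h y').1 hx)) hc.le
    rw [hexp, hexp]
    linarith

theorem face_eq_iff {n : ℕ} (S D : Set (Fin n → ℝ)) (z : Fin n → ℝ) (c : ℝ) (hc : 0 < c)
    (h : ∀ y, z + c • y ∈ S ↔ y ∈ D) (w w' : Fin n → ℝ) :
    faceOf S w = faceOf S w' ↔ faceOf D w = faceOf D w' := by
  have hsurj : ∀ x : Fin n → ℝ, ∃ y, x = z + c • y := fun x =>
    ⟨c⁻¹ • (x - z), by rw [smul_inv_smul₀ hc.ne']; simp⟩
  constructor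
  · intro he
    ext y
    rw [← mem_face_iff S D z c hc h, ← mem_face_iff S D z c hc h, he]
  · intro he
    ext x
    obtain ⟨y, rfl⟩ := hsurj x
    rw [mem_face_iff S D z c hc h, mem_face_iff S D z c hc h, he]

/-- Every full-dimensional alcoved simplex in `H_n` (an alcoved polytope which is
the convex hull of `n` affinely independent points) has the same normal fan as the
alcoved simplex `Δ_{S'}` of some cyclic order `S'` of `[n]`, i.e. of the polytope
`x_{σ 0} ≥ x_{σ 1} ≥ ... ≥ x_{σ (n-1)} ≥ x_{σ 0} - 1` in `H_n`.  Equality of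
normal fans is expressed by: two directions pick the same face of one polytope
iff they pick the same face of the other. -/
theorem stmt11 {n : ℕ} (hn : 0 < n) (S : Set (Fin n → ℝ))
    (a : Fin n → Fin n → ℝ)
    (halc : S = {x : Fin n → ℝ | (∑ i, x i) = 0 ∧ ∀ i j, x i - x j ≤ a i j})
    (V : Fin n → (Fin n → ℝ)) (hV : AffineIndependent ℝ V)
    (hSV : S = convexHull ℝ (Set.range V)) :
    ∃ σ : Equiv.Perm (Fin n), ∃ Δ : Set (Fin n → ℝ),
      Δ = {x : Fin n → ℝ | (∑ i, x i) = 0 ∧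
          (∀ k : Fin n, ∀ h : (k : ℕ) + 1 < n, x (σ ⟨(k : ℕ) + 1, h⟩) ≤ x (σ k)) ∧
          x (σ ⟨0, hn⟩) - 1 ≤ x (σ ⟨n - 1, Nat.sub_lt hn one_pos⟩)} ∧
      ∀ w w' : Fin n → ℝ,
        faceOf S w = faceOf S w' ↔ faceOf Δ w = faceOf Δ w' := by
  classical
  rcases Nat.lt_or_ge n 2 with h2 | h2
  · obtain rfl : n = 1 := by omega
    refine ⟨1, _, rfl, fun w w' => ?_⟩
    have hf : ∀ (P : Set (Fin 1 → ℝ)), (∀ x ∈ P, ∑ i, x i = 0) →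
        ∀ w w', faceOf P w = faceOf P w' := by
      intro P hP w w'
      have h0 : ∀ x ∈ P, x 0 = 0 := fun x hx => by simpa using hP x hx
      have : ∀ w, faceOf P w = P := by
        intro w
        ext x
        refine ⟨fun h => h.1, fun h => ⟨h, fun y hy => ?_⟩⟩
        simp [h0 x h, h0 y hy]
      rw [this, this]
    exact ⟨fun _ => hf _ (fun x hx => hx.1) _ _,
      fun _ => hf S (fun x hx => by rw [halc] at hx; exact hx.1) _ _⟩
  · obtain ⟨π, z, c, hc, hz0, hS, hcyc⟩ := exists_cycle h2 S a halc V hV hSV ⟨0, hn⟩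
    have hon : (π⁻¹).IsCycleOn ((Finset.univ : Finset (Fin n)) : Set (Fin n)) := by
      refine ⟨by simp, fun u _ v _ => ?_⟩
      exact Equiv.Perm.sameCycle_inv.2 (hcyc u v)
    let v0 : Fin n := ⟨0, hn⟩
    let f : Fin n → Fin n := fun t => (π⁻¹ ^ (t : ℕ)) v0
    have hfb : Function.Bijective f := by
      apply Finite.surjective_iff_bijective.1
      intro v
      obtain ⟨m, hm, hmv⟩ := hon.exists_pow_eq (Finset.mem_univ v0) (Finset.mem_univ v)
      rw [Finset.card_univ, Fintype.card_fin] at hm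
      exact ⟨⟨m, hm⟩, hmv⟩
    have hcard : (π⁻¹ ^ n) v0 = v0 := by
      have := hon.pow_card_apply (Finset.mem_univ v0)
      rwa [Finset.card_univ, Fintype.card_fin] at this
    have hf0 : f ⟨0, hn⟩ = v0 := rfl
    have hfs : ∀ (k : Fin n) (h : (k : ℕ) + 1 < n), π (f ⟨k + 1, h⟩) = f k := by
      intro k h
      simp only [f, pow_succ', Equiv.Perm.mul_apply]
      exact π.apply_symm_apply _
    have hfl : π v0 = f ⟨n - 1, Nat.sub_lt hn one_pos⟩ := by
      have h1 : (π⁻¹ ^ (n - 1 + 1)) v0 = v0 := by rwa [Nat.sub_add_cancel hn]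
      rw [pow_succ', Equiv.Perm.mul_apply] at h1
      simp only [f]
      conv_lhs => rw [← h1]
      exact π.apply_symm_apply _
    refine ⟨Equiv.ofBijective f hfb, _, rfl, face_eq_iff S _ z c hc fun y => ?_⟩
    rw [hS]
    simp only [Equiv.ofBijective_apply, Set.mem_ofPred_eq, hf0, ← hfl]
    have hsum : ∑ i, (z + c • y) i = 0 ↔ ∑ i, y i = 0 := by
      simp [Finset.sum_add_distrib, hz0, ← Finset.mul_sum, hc.ne']
    rw [hsum]
    refine and_congr_right fun _ => ?_
    have hineq : ∀ v, ((z + c • y) v - (z + c • y) (π v) ≤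
        z v - z (π v) + c * (if v = ⟨0, hn⟩ then 1 else 0)) ↔
        y v - y (π v) ≤ (if v = ⟨0, hn⟩ then 1 else 0) := by
      intro v
      rw [← mul_le_mul_iff_right₀ hc (b := y v - y (π v))]
      simp only [Pi.add_apply, Pi.smul_apply, smul_eq_mul]
      constructor <;> intro h <;> linarith
    simp only [hineq]
    constructor
    · intro h
      refine ⟨fun k hk => ?_, ?_⟩
      · have h1 := h (f ⟨k + 1, hk⟩)
        rw [hfs, if_neg] at h1
        · linarith
        · intro h'
          have := hfb.1 (h'.trans hf0.symm)
          simp at this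
      · have h1 := h v0
        rw [if_pos rfl] at h1
        linarith
    · rintro ⟨h1, h3⟩ v
      obtain ⟨⟨t, ht⟩, rfl⟩ := hfb.2 v
      rcases t with _ | t
      · rw [hf0, if_pos rfl]; linarith
      · have h4 := h1 ⟨t, by omega⟩ ht
        have h5 := hfs ⟨t, by omega⟩ ht
        simp only at h4 h5
        rw [h5, if_neg]
        · linarith
        · intro h'
          have := hfb.1 (h'.trans hf0.symm)
          simp at this
end

section
/- Let S, T be nondegenerate ordered set partitions (cyclic orders) of [n] that are 4-interlaced: there exist distinct a, b, c, d such that the restriction of S to {a,b,c,d} is the cyclic order (a,b,c,d) and the restriction of T is (c,b,a,d). Then the graph G_{S,T} = G_S ∪ G_T^op contains a violating cycle, namely the 4-cycle a → b (upper), b → c (lower), c → d (upper), d → a (lower). -/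
/-- Four elements appear in this cyclic order in the cyclic sequence `j`. -/
def CycOrd4 {n : ℕ} (j : ℕ → Fin n) (a b c d : Fin n) : Prop :=
  ∃ t1 t2 t3 t4 : ℕ, t1 < t2 ∧ t2 < t3 ∧ t3 < t4 ∧ t4 < t1 + n ∧
    j t1 = a ∧ j t2 = b ∧ j t3 = c ∧ j t4 = d

theorem window_inj {n : ℕ} (hn : 0 < n) (S : ℕ → Fin n)
    (hper : ∀ t, S (t + n) = S t) (hbij : ∀ y : Fin n, ∃! t : ℕ, t < n ∧ S t = y)
    (p q : ℕ) (h1 : p < q + n) (h2 : q < p + n) (h : S p = S q) : p = q := by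
  have hP : Function.Periodic S n := hper
  have e1 : S (p % n) = S p := hP.map_mod_nat p
  have e2 : S (q % n) = S q := hP.map_mod_nat q
  have hm : p % n = q % n :=
    (hbij (S p)).unique ⟨Nat.mod_lt _ hn, e1⟩ ⟨Nat.mod_lt _ hn, by rw [e2, h]⟩
  have hm' : p ≡ q [MOD n] := hm
  rcases le_total p q with hle | hle
  · have hd := (Nat.modEq_iff_dvd' hle).1 hm'
    have := Nat.eq_zero_of_dvd_of_lt hd (by omega)
    omega
  · have hd := (Nat.modEq_iff_dvd' hle).1 hm'.symm
    have := Nat.eq_zero_of_dvd_of_lt hd (by omega)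
    omega

/-- The alternating closed walk. -/
def walkFun {n : ℕ} (S T : ℕ → Fin n) (t1 t2 t3 t4 u1 u2 u4 : ℕ) (k : ℕ) : Fin n :=
  if k < t2 - t1 then S (t1 + k)
  else if k < (t2 - t1) + (u2 - u1) then T (u2 - (k - (t2 - t1)))
  else if k < (t2 - t1) + (u2 - u1) + (t4 - t3) then S (t3 + (k - ((t2 - t1) + (u2 - u1))))
  else T (u4 - (k - ((t2 - t1) + (u2 - u1) + (t4 - t3))))

/-- The labels of the walk. -/
def labFun (A B C : ℕ) (k : ℕ) : Bool :=
  decide (k < A ∨ (A + B ≤ k ∧ k < A + B + C))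

theorem exists_good {n : ℕ} (S T : ℕ → Fin n) (N : ℕ) :
    ∀ t1 t2 t3 t4 u1 u2 u3 u4 : ℕ,
    (t2 - t1) + (t4 - t3) + (u2 - u1) + (u4 - u3) = N →
    t1 < t2 → t2 < t3 → t3 < t4 → t4 < t1 + n →
    u1 < u2 → u2 < u3 → u3 < u4 → u4 < u1 + n →
    S t1 = T u3 → S t2 = T u2 → S t3 = T u1 → S t4 = T u4 →
    ∃ t1 t2 t3 t4 u1 u2 u3 u4 : ℕ,
    (t1 < t2 ∧ t2 < t3 ∧ t3 < t4 ∧ t4 < t1 + n ∧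
    u1 < u2 ∧ u2 < u3 ∧ u3 < u4 ∧ u4 < u1 + n) ∧
    (S t1 = T u3 ∧ S t2 = T u2 ∧ S t3 = T u1 ∧ S t4 = T u4) ∧
    ∀ p q, ((t1 < p ∧ p < t2) ∨ (t3 < p ∧ p < t4)) →
      ((u1 < q ∧ q < u2) ∨ (u3 < q ∧ q < u4)) → S p ≠ T q := by
  induction N using Nat.strong_induction_on with
  | _ N ih =>
    intro t1 t2 t3 t4 u1 u2 u3 u4 hN h1 h2 h3 h4 g1 g2 g3 g4 e1 e2 e3 e4
    by_cases H : ∀ p q, ((t1 < p ∧ p < t2) ∨ (t3 < p ∧ p < t4)) →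
      ((u1 < q ∧ q < u2) ∨ (u3 < q ∧ q < u4)) → S p ≠ T q
    · exact ⟨t1, t2, t3, t4, u1, u2, u3, u4, ⟨h1, h2, h3, h4, g1, g2, g3, g4⟩,
        ⟨e1, e2, e3, e4⟩, H⟩
    · push Not at H
      obtain ⟨p, q, hp, hq, hpq⟩ := H
      rcases hp with hp | hp <;> rcases hq with hq | hq
      · exact ih _ (by omega) t1 p t3 t4 u1 q u3 u4 rfl (by omega) (by omega) (by omega)
          (by omega) (by omega) (by omega) (by omega) (by omega) e1 hpq e3 e4
      · exact ih _ (by omega) p t2 t3 t4 u1 u2 q u4 rfl (by omega) (by omega) (by omega)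
          (by omega) (by omega) (by omega) (by omega) (by omega) hpq e2 e3 e4
      · exact ih _ (by omega) t1 t2 p t4 q u2 u3 u4 rfl (by omega) (by omega) (by omega)
          (by omega) (by omega) (by omega) (by omega) (by omega) e1 e2 hpq e4
      · exact ih _ (by omega) t1 t2 t3 p u1 u2 u3 q rfl (by omega) (by omega) (by omega)
          (by omega) (by omega) (by omega) (by omega) (by omega) e1 e2 e3 hpq

/-- If the cyclic orders `S`, `T` on `[n]` are `4`-interlaced — on some distinct
`a, b, c, d` the restriction of `S` is the cyclic order `(a,b,c,d)` and that of
`T` is `(c,b,a,d)` — then the graph `G_{S,T} = G_S ∪ G_T^op` contains a violating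
cycle: a closed walk `v 0, ..., v L = v 0` whose edges are edges of `G_S` (upper,
`U t = true`) or reversed edges of `G_T` (lower), visiting every vertex at most
once and having at least two disjoint maximal upper path segments. -/
theorem stmt19 {n : ℕ} (hn : 0 < n) (S T : ℕ → Fin n)
    (hSper : ∀ t, S (t + n) = S t) (hTper : ∀ t, T (t + n) = T t)
    (hSbij : ∀ y : Fin n, ∃! t : ℕ, t < n ∧ S t = y)
    (hTbij : ∀ y : Fin n, ∃! t : ℕ, t < n ∧ T t = y)
    (a b c d : Fin n) (hdist : ([a, b, c, d] : List (Fin n)).Pairwise (· ≠ ·))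
    (hS4 : CycOrd4 S a b c d) (hT4 : CycOrd4 T c b a d) :
    ∃ (L : ℕ) (v : ℕ → Fin n) (U : ℕ → Bool),
      2 ≤ L ∧ (∀ t, v (t + L) = v t) ∧ (∀ t, U (t + L) = U t) ∧
      (∀ t, if U t then (∃ r : ℕ, S r = v t ∧ S (r + 1) = v (t + 1))
        else (∃ r : ℕ, T r = v (t + 1) ∧ T (r + 1) = v t)) ∧
      (∀ s t, s < L → t < L → v s = v t → s = t) ∧
      (∃ t₁ t₂ : ℕ, t₁ < t₂ ∧ t₂ < L ∧
        U t₁ = true ∧ U (t₁ + 1) = false ∧ U t₂ = true ∧ U (t₂ + 1) = false) := by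
  obtain ⟨s1, s2, s3, s4, i1, i2, i3, i4, ha, hb, hc, hd⟩ := hS4
  obtain ⟨r1, r2, r3, r4, j1, j2, j3, j4, hc', hb', ha', hd'⟩ := hT4
  obtain ⟨t1, t2, t3, t4, u1, u2, u3, u4, ⟨h1, h2, h3, h4, g1, g2, g3, g4⟩,
    ⟨e1, e2, e3, e4⟩, hno⟩ := exists_good S T _ s1 s2 s3 s4 r1 r2 r3 r4 rfl i1 i2 i3 i4
      j1 j2 j3 j4 (ha.trans ha'.symm) (hb.trans hb'.symm) (hc.trans hc'.symm)
      (hd.trans hd'.symm)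
  have iS := window_inj hn S hSper hSbij
  have iT := window_inj hn T hTper hTbij
  have hno' : ∀ p q, ((t1 ≤ p ∧ p < t2) ∨ (t3 ≤ p ∧ p < t4)) →
      ((u1 < q ∧ q ≤ u2) ∨ (u3 < q ∧ q ≤ u4)) → S p ≠ T q := by
    intro p q hp hq h
    by_cases c1 : p = t1
    · subst c1
      have := iT u3 q (by omega) (by omega) (e1.symm.trans h)
      omega
    by_cases c2 : p = t3
    · subst c2
      have := iT u1 q (by omega) (by omega) (e3.symm.trans h)
      omega
    by_cases c3 : q = u2
    · subst c3
      have := iS p t2 (by omega) (by omega) (h.trans e2.symm)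
      omega
    by_cases c4 : q = u4
    · subst c4
      have := iS p t4 (by omega) (by omega) (h.trans e4.symm)
      omega
    exact hno p q (by omega) (by omega) h
  obtain ⟨A, hA⟩ : ∃ A, A = t2 - t1 := ⟨_, rfl⟩
  obtain ⟨B, hB⟩ : ∃ B, B = u2 - u1 := ⟨_, rfl⟩
  obtain ⟨C, hC⟩ : ∃ C, C = t4 - t3 := ⟨_, rfl⟩
  obtain ⟨D, hD⟩ : ∃ D, D = u4 - u3 := ⟨_, rfl⟩
  obtain ⟨L, hL⟩ : ∃ L, L = A + B + C + D := ⟨_, rfl⟩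
  obtain ⟨w, hw⟩ : ∃ w, w = walkFun S T t1 t2 t3 t4 u1 u2 u4 := ⟨_, rfl⟩
  have w1 : ∀ k, k ≤ A → w k = S (t1 + k) := by
    intro k hk
    subst hw
    unfold walkFun
    rcases Nat.lt_or_eq_of_le hk with hk | hk
    · rw [if_pos (by omega)]
    · rw [if_neg (by omega), if_pos (by omega), show t1 + k = t2 by omega, e2]
      congr 1; omega
  have w2 : ∀ k, A ≤ k → k ≤ A + B → w k = T (u2 - (k - A)) := by
    intro k hk0 hk
    subst hw
    unfold walkFun
    rcases Nat.lt_or_eq_of_le hk with hk | hk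
    · rw [if_neg (by omega), if_pos (by omega), hA]
    · rw [if_neg (by omega), if_neg (by omega), if_pos (by omega),
        show u2 - (k - A) = u1 by omega, ← e3]
      congr 1; omega
  have w3 : ∀ k, A + B ≤ k → k ≤ A + B + C → w k = S (t3 + (k - (A + B))) := by
    intro k hk0 hk
    subst hw
    unfold walkFun
    rcases Nat.lt_or_eq_of_le hk with hk | hk
    · rw [if_neg (by omega), if_neg (by omega), if_pos (by omega), hA, hB]
    · rw [if_neg (by omega), if_neg (by omega), if_neg (by omega),
        show t3 + (k - (A + B)) = t4 by omega, e4]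
      congr 1; omega
  have w4 : ∀ k, A + B + C ≤ k → w k = T (u4 - (k - (A + B + C))) := by
    intro k hk0
    subst hw
    unfold walkFun
    rw [if_neg (by omega), if_neg (by omega), if_neg (by omega), hA, hB, hC]
  have wL : w L = w 0 := by
    rw [w4 L (by omega), w1 0 (by omega), Nat.add_zero, e1]
    congr 1; omega
  have hL0 : 0 < L := by omega
  have lab : ∀ k, labFun A B C k = true ↔ (k < A ∨ (A + B ≤ k ∧ k < A + B + C)) := by
    intro k; simp [labFun]
  have labf : ∀ k, labFun A B C k = false ↔ ¬ (k < A ∨ (A + B ≤ k ∧ k < A + B + C)) := by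
    intro k; simp [labFun]
  refine ⟨L, fun t => w (t % L), fun t => labFun A B C (t % L), by omega, ?_, ?_, ?_, ?_, ?_⟩
  · intro t; simp
  · intro t; simp
  · intro t
    have hs : w ((t + 1) % L) = w (t % L + 1) := by
      have hlt := Nat.mod_lt t hL0
      by_cases hc : t % L + 1 = L
      · have : (t + 1) % L = 0 := by
          rw [← Nat.mod_add_mod, hc, Nat.mod_self]
        rw [this, hc, wL]
      · congr 1
        rw [← Nat.mod_add_mod, Nat.mod_eq_of_lt]; omega
    have hlt := Nat.mod_lt t hL0
    simp only [hs]
    generalize t % L = m at hlt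
    split_ifs with hU
    · rcases (lab m).1 hU with hm | hm
      · exact ⟨t1 + m, (w1 m (by omega)).symm, (w1 (m + 1) (by omega)).symm⟩
      · refine ⟨t3 + (m - (A + B)), (w3 m (by omega) (by omega)).symm, ?_⟩
        rw [w3 (m + 1) (by omega) (by omega)]
        congr 1; omega
    · have hm := (labf m).1 (by simpa using hU)
      by_cases hm' : m < A + B
      · refine ⟨u2 - (m + 1 - A), (w2 (m + 1) (by omega) (by omega)).symm, ?_⟩
        rw [w2 m (by omega) (by omega)]
        congr 1; omega
      · refine ⟨u4 - (m + 1 - (A + B + C)), (w4 (m + 1) (by omega)).symm, ?_⟩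
        rw [w4 m (by omega)]
        congr 1; omega
  · intro s t hs ht h
    simp only [Nat.mod_eq_of_lt hs, Nat.mod_eq_of_lt ht] at h
    have key : ∀ k, k < L →
        (∃ p, w k = S p ∧ ((t1 ≤ p ∧ p < t2 ∧ k = p - t1) ∨
          (t3 ≤ p ∧ p < t4 ∧ k = A + B + (p - t3)))) ∨
        (∃ q, w k = T q ∧ ((u1 < q ∧ q ≤ u2 ∧ k = A + (u2 - q)) ∨
          (u3 < q ∧ q ≤ u4 ∧ k = A + B + C + (u4 - q)))) := by
      intro k hk
      by_cases k1 : k < A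
      · exact Or.inl ⟨_, w1 k (by omega), by omega⟩
      by_cases k2 : k < A + B
      · exact Or.inr ⟨_, w2 k (by omega) (by omega), by omega⟩
      by_cases k3 : k < A + B + C
      · exact Or.inl ⟨_, w3 k (by omega) (by omega), by omega⟩
      · exact Or.inr ⟨_, w4 k (by omega), by omega⟩
    rcases key s hs with ⟨p, hp, hp'⟩ | ⟨p, hp, hp'⟩ <;>
      rcases key t ht with ⟨q, hq, hq'⟩ | ⟨q, hq, hq'⟩
    · have := iS p q (by omega) (by omega) (by rw [← hp, ← hq, h])
      omega
    · exact absurd (by rw [← hp, ← hq, h]) (hno' p q (by omega) (by omega))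
    · exact absurd (by rw [← hp, ← hq, h]) (hno' q p (by omega) (by omega))
    · have := iT p q (by omega) (by omega) (by rw [← hp, ← hq, h])
      omega
  · refine ⟨A - 1, A + B + C - 1, by omega, by omega, ?_, ?_, ?_, ?_⟩
    · simp only [Nat.mod_eq_of_lt (show A - 1 < L by omega)]
      exact (lab _).2 (by omega)
    · simp only [Nat.mod_eq_of_lt (show A - 1 + 1 < L by omega)]
      exact (labf _).2 (by omega)
    · simp only [Nat.mod_eq_of_lt (show A + B + C - 1 < L by omega)]
      exact (lab _).2 (by omega)
    · simp only [Nat.mod_eq_of_lt (show A + B + C - 1 + 1 < L by omega)]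
      exact (labf _).2 (by omega)
end
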